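/- Let q ≥ 1 and let Σ ⊂ (ℝ^q)* be the restricted root system of u(p,q) with p > q, namely the set of linear functionals ±f_i ± f_j (1 ≤ i < j ≤ q, all four sign combinations), ±2f_i, and ±f_i (1 ≤ i ≤ q), where f_i(x) = x_i. If γ ∈ ℝ^q is nonzero and dominant, i.e., γ_1 ≥ γ_2 ≥ … ≥ γ_q ≥ 0, then span(Σ ∩ γ^⊥) = span(Σ) ∩ γ^⊥ if and only if γ is a positive multiple of (1,…,1,0,…,0) with r ones for some r ∈ [q]. -/

import Mathlib

/-- The coordinate functional `f_i ∈ (ℝ^q)*`, `f_i(x) = x_i` (dual basis of the standard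
basis). -/
def coordFunctional (q : ℕ) (i : Fin q) : Module.Dual ℝ (Fin q → ℝ) :=
  LinearMap.proj i

/-- The restricted root system `Σ ⊂ (ℝ^q)*` of `u(p,q)` with `p > q` : the functionals
`±f_i ± f_j` (`1 ≤ i < j ≤ q`, all four sign combinations), `±2f_i` and `±f_i`
(`1 ≤ i ≤ q`). -/
def restrictedRoots (q : ℕ) : Set (Module.Dual ℝ (Fin q → ℝ)) :=
  {α | (∃ i j : Fin q, i < j ∧
        (α = coordFunctional q i + coordFunctional q j ∨
         α = coordFunctional q i - coordFunctional q j ∨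
         α = -coordFunctional q i + coordFunctional q j ∨
         α = -coordFunctional q i - coordFunctional q j)) ∨
      (∃ i : Fin q, α = (2 : ℝ) • coordFunctional q i ∨
         α = -((2 : ℝ) • coordFunctional q i)) ∨
      (∃ i : Fin q, α = coordFunctional q i ∨ α = -coordFunctional q i)}

/-- **Classification of admissible elements for `U(p,q)`.**  Let `Σ` be the restricted root
system of `u(p,q)` (`p > q`) and let `γ ∈ ℝ^q` be nonzero and dominant
(`γ_1 ≥ … ≥ γ_q ≥ 0`).  Then `span(Σ ∩ γ^⊥) = span(Σ) ∩ γ^⊥` if and only if `γ` is a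
positive multiple of `(1,…,1,0,…,0)` with `r` ones, for some `r ∈ [q]`. -/
theorem admissible_iff_indicator (q : ℕ) (hq : 1 ≤ q)
    (γ : Fin q → ℝ) (hγne : γ ≠ 0)
    (hdom : (∀ i j : Fin q, i ≤ j → γ j ≤ γ i) ∧ ∀ i, 0 ≤ γ i) :
    (Submodule.span ℝ {α ∈ restrictedRoots q | α γ = 0} =
        Submodule.span ℝ (restrictedRoots q)
          ⊓ LinearMap.ker (Module.Dual.eval ℝ (Fin q → ℝ) γ)) ↔
      ∃ r : ℕ, 1 ≤ r ∧ r ≤ q ∧ ∃ t : ℝ, 0 < t ∧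
        γ = fun i => if i.val < r then t else 0 := by
  have hcr : ∀ i : Fin q, coordFunctional q i ∈ restrictedRoots q :=
    fun i => Or.inr (Or.inr ⟨i, Or.inl rfl⟩)
  have hca : ∀ (i : Fin q) (x : Fin q → ℝ), coordFunctional q i x = x i := fun i x => rfl
  obtain ⟨hmono, hnn⟩ := hdom
  let z : Fin q := ⟨0, hq⟩
  have hz : ∀ i : Fin q, z ≤ i := fun i => Nat.zero_le _
  constructor
  · intro h
    have hz0 : 0 < γ z := by
      rcases (hnn z).lt_or_eq with h0 | h0
      · exact h0
      · exact absurd (funext fun i => le_antisymm (h0 ▸ hmono z i (hz i)) (hnn i)) hγne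
    let δ : Fin q → ℝ := fun i => if γ i = γ z then γ z else 0
    have hδ0 : ∀ i, γ i = 0 → δ i = 0 := by
      intro i hi
      have : ¬ (γ i = γ z) := by rw [hi]; exact hz0.ne
      simp [δ, this]
    have hδe : ∀ i j, γ i = γ j → δ i = δ j := by
      intro i j hij
      simp only [δ, hij]
    have hle : Submodule.span ℝ {α ∈ restrictedRoots q | α γ = 0} ≤
        LinearMap.ker (Module.Dual.eval ℝ (Fin q → ℝ) δ) := by
      rw [Submodule.span_le]
      rintro α ⟨hα, h0⟩
      simp only [SetLike.mem_coe, LinearMap.mem_ker, Module.Dual.eval_apply]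
      rcases hα with ⟨i, j, -, rfl | rfl | rfl | rfl⟩ | ⟨i, rfl | rfl⟩ | ⟨i, rfl | rfl⟩ <;>
        simp only [LinearMap.add_apply, LinearMap.sub_apply, LinearMap.neg_apply,
          LinearMap.smul_apply, hca, smul_eq_mul] at h0 ⊢
      · have := hnn i
        have := hnn j
        rw [hδ0 i (by linarith), hδ0 j (by linarith)]; simp
      · rw [hδe i j (by linarith)]; simp
      · rw [hδe i j (by linarith)]; simp
      · have := hnn i
        have := hnn j
        rw [hδ0 i (by linarith), hδ0 j (by linarith)]; simp
      all_goals simp [hδ0 i (by linarith)]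
    have hval : ∀ j, γ j = 0 ∨ γ j = γ z := by
      intro j
      have hm : γ j • coordFunctional q z - γ z • coordFunctional q j ∈
          Submodule.span ℝ {α ∈ restrictedRoots q | α γ = 0} := by
        rw [h]
        refine ⟨Submodule.sub_mem _ (Submodule.smul_mem _ _ (Submodule.subset_span (hcr _)))
          (Submodule.smul_mem _ _ (Submodule.subset_span (hcr _))), ?_⟩
        simp only [SetLike.mem_coe, LinearMap.mem_ker, Module.Dual.eval_apply,
          LinearMap.sub_apply, LinearMap.smul_apply, hca, smul_eq_mul]
        ring
      have h1 := hle hm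
      simp only [LinearMap.mem_ker, Module.Dual.eval_apply,
          LinearMap.sub_apply, LinearMap.smul_apply, hca, smul_eq_mul] at h1
      by_cases hj : γ j = γ z
      · exact Or.inr hj
      · left
        simp only [δ, hj, if_true, if_false, mul_zero, sub_zero] at h1
        rcases mul_eq_zero.1 h1 with h2 | h2
        · exact h2
        · exact absurd h2 hz0.ne'
    classical
    have hex : ∃ n : ℕ, ∀ j : Fin q, n ≤ j.val → γ j = 0 :=
      ⟨q, fun j hj => absurd j.2 (not_lt.2 hj)⟩
    refine ⟨Nat.find hex, ?_, ?_, γ z, hz0, ?_⟩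
    · by_contra hlt
      exact hz0.ne' (Nat.find_spec hex z (by omega))
    · exact Nat.find_min' hex fun j hj => absurd j.2 (not_lt.2 hj)
    · funext i
      split_ifs with hi
      · rcases hval i with h0 | h0
        · exfalso
          exact Nat.find_min hex hi fun j hj =>
            le_antisymm (h0 ▸ hmono i j hj) (hnn j)
        · exact h0
      · exact Nat.find_spec hex i (not_lt.1 hi)
  · rintro ⟨r, hr1, hrq, t, ht, hγ⟩
    apply le_antisymm
    · rw [Submodule.span_le]
      rintro α ⟨hα, h0⟩
      exact ⟨Submodule.subset_span hα, h0⟩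
    · rintro α ⟨-, h0⟩
      have h0 : α γ = 0 := h0
      have hexp : ∀ x : Fin q → ℝ, α x = ∑ i, x i * α (Pi.single i 1) := by
        intro x
        conv_lhs => rw [pi_eq_sum_univ' x]
        simp [map_sum, Pi.single_apply, Pi.single, Function.update_apply]
      have hs : ∑ i : Fin q, (if i.val < r then (1 : ℝ) else 0) * α (Pi.single i 1) = 0 := by
        rw [hexp γ] at h0
        have : t * ∑ i : Fin q, (if i.val < r then (1 : ℝ) else 0) * α (Pi.single i 1) = 0 := by
          refine Eq.trans ?_ h0
          rw [Finset.mul_sum]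
          refine Finset.sum_congr rfl fun i _ => ?_
          rw [hγ]
          dsimp only
          split_ifs <;> ring
        exact (mul_eq_zero.1 this).resolve_left ht.ne'
      have hα : α = ∑ i : Fin q, α (Pi.single i 1) •
          (coordFunctional q i - (if i.val < r then (1 : ℝ) else 0) • coordFunctional q z) := by
        refine LinearMap.ext fun x => ?_
        rw [hexp x]
        simp only [LinearMap.sum_apply, LinearMap.sub_apply, LinearMap.smul_apply, hca,
          smul_eq_mul, mul_sub, Finset.sum_sub_distrib]
        have : ∑ i : Fin q, α (Pi.single i 1) * ((if i.val < r then (1 : ℝ) else 0) * x z) = 0 := by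
          refine Eq.trans ?_ (zero_mul (x z))
          rw [show (0 : ℝ) * x z = (∑ i : Fin q, (if i.val < r then (1 : ℝ) else 0) * α (Pi.single i 1)) * x z by rw [hs], Finset.sum_mul]
          exact Finset.sum_congr rfl fun i _ => by ring
        rw [this, sub_zero]
        exact Finset.sum_congr rfl fun i _ => by ring
      rw [hα]
      refine Submodule.sum_mem _ fun i _ => Submodule.smul_mem _ _ ?_
      have hγz : γ z = t := by
        rw [hγ]; exact if_pos hr1
      by_cases hi : i.val < r
      · rw [if_pos hi, one_smul]
        have hγi : γ i = t := by rw [hγ]; exact if_pos hi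
        rcases (hz i).eq_or_lt with he | hlt
        · rw [← he, sub_self]; exact Submodule.zero_mem _
        · refine Submodule.subset_span ⟨Or.inl ⟨z, i, hlt, Or.inr (Or.inr (Or.inl ?_))⟩, ?_⟩
          · abel
          · simp only [LinearMap.sub_apply, hca, hγi, hγz, sub_self]
      · rw [if_neg hi, zero_smul, sub_zero]
        refine Submodule.subset_span ⟨hcr i, ?_⟩
        rw [hca, hγ]; exact if_neg hi
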